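/- Under the hypotheses of the previous statement (ε^s y^{(n)} + … singularly perturbed, a_k(t,0) ≢ 0 for some 1 ≤ k ≤ n−1), there cannot exist n parameter-dependent solutions y_1(t,ε),…,y_n(t,ε), all holomorphic on the full polydisc U × W, that are linearly independent over ℂ for at least one value of ε ∈ W. -/

import Mathlib

open Set

open Filter Function Topology

/-!
At `ε = 0` the leading coefficient vanishes, so the equation has order less than `n` there and any
`n` solutions become linearly dependent. A linear combination of solution families that vanishes at
`ε = 0` can be divided by `ε`, and by continuity in `ε` the quotient is again a solution family.
Replacing one of the `y j` by such a quotient divides every determinant `det (y j (t i) ε)` by `ε`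
up to a nonzero constant. Since this can be repeated indefinitely, each of these determinants
vanishes to infinite order at `ε = 0`, hence identically on `W`, and the `y j` are linearly
dependent for every `ε`.
-/

section Dependence

variable {𝕜 X ι : Type*}

/-- The matrix whose entry `(j, i)` is the value at parameter `ε` of the `j`-th function of the
family `v` at the `i`-th sample point. It detects linear independence of the functions
`v j · ε`. -/
def sampleMatrix (v : ι → X → 𝕜 → 𝕜) (x : ι → X) (ε : 𝕜) : Matrix ι ι 𝕜 :=
  Matrix.of fun j i => v j (x i) ε

variable [Fintype ι] [DecidableEq ι]

theorem exists_det_ne_zero_of_linearIndependent [Field 𝕜] {f : ι → X → 𝕜}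
    (hf : LinearIndependent 𝕜 f) :
    ∃ x : ι → X, (Matrix.of fun j i => f j (x i)).det ≠ 0 := by
  obtain ⟨κ, a, -, hspan, hli⟩ := exists_linearIndependent' 𝕜 (flip f)
  rw [span_flip_eq_top_iff_linearIndependent.mpr hf] at hspan
  let e : ι ≃ κ := (Pi.basisFun 𝕜 ι).indexEquiv (Module.Basis.mk hli hspan.ge)
  refine ⟨a ∘ e, ?_⟩
  rw [← isUnit_iff_ne_zero, ← Matrix.isUnit_iff_isUnit_det,
    ← Matrix.linearIndependent_cols_iff_isUnit]
  exact hli.comp e e.injective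

variable [NontriviallyNormedField 𝕜] {v : ι → X → 𝕜 → 𝕜} {x : ι → X} {ε₀ : 𝕜}

theorem analyticAt_det_sampleMatrix (hv : ∀ j i, AnalyticAt 𝕜 (v j (x i)) ε₀) :
    AnalyticAt 𝕜 (fun ε => (sampleMatrix v x ε).det) ε₀ := by
  simp only [Matrix.det_apply', sampleMatrix, Matrix.of_apply]
  exact Finset.analyticAt_fun_sum _ fun σ _ => analyticAt_const.mul <|
    Finset.analyticAt_fun_prod _ fun i _ => hv (σ i) i

theorem mul_det_sampleMatrix_eq (c : ι → 𝕜) (p : ι) (hzero : ∀ i, ∑ j, c j * v j (x i) ε₀ = 0)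
    (ε : 𝕜) :
    c p * (sampleMatrix v x ε).det = (ε - ε₀) *
      (sampleMatrix (update v p fun y => dslope ((∑ j, c j • v j) y) ε₀) x ε).det := by
  set u : X → 𝕜 → 𝕜 := ∑ j, c j • v j with hu
  have hrow : ∑ j, c j • sampleMatrix v x ε j = (ε - ε₀) • fun i => dslope (u (x i)) ε₀ ε := by
    ext i
    have hui : u (x i) ε₀ = 0 := by simpa [hu, Finset.sum_apply] using hzero i
    simpa [hu, sampleMatrix, Finset.sum_apply] using (sub_smul_dslope_of_zero hui ε).symm
  have hupdate : sampleMatrix (update v p fun y => dslope (u y) ε₀) x ε =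
      (sampleMatrix v x ε).updateRow p fun i => dslope (u (x i)) ε₀ ε := by
    ext j i
    rcases eq_or_ne j p with rfl | hj
    · simp [sampleMatrix]
    · simp [sampleMatrix, hj]
  rw [hupdate, ← Matrix.det_updateRow_smul, ← hrow, Matrix.det_updateRow_sum, smul_eq_mul]

variable {M : Submodule 𝕜 (X → 𝕜 → 𝕜)} {S : Set X}

theorem le_analyticOrderAt_det_sampleMatrix
    (hM : ∀ f ∈ M, ∀ y ∈ S, AnalyticAt 𝕜 (f y) ε₀)
    (hdiv : ∀ f ∈ M, (∀ y ∈ S, f y ε₀ = 0) → (fun y => dslope (f y) ε₀) ∈ M)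
    (hdep : ∀ v : ι → X → 𝕜 → 𝕜, (∀ j, v j ∈ M) →
      ¬ LinearIndependent 𝕜 (fun j (y : S) => v j y ε₀))
    (hv : ∀ j, v j ∈ M) (hx : ∀ i, x i ∈ S) (m : ℕ) :
    m ≤ analyticOrderAt (fun ε => (sampleMatrix v x ε).det) ε₀ := by
  induction m generalizing v with
  | zero => exact zero_le
  | succ m ih =>
    obtain ⟨c, hc, p, hp⟩ := Fintype.not_linearIndependent_iff.mp (hdep v hv)
    have hzero (y) (hy : y ∈ S) : ∑ j, c j * v j y ε₀ = 0 := by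
      simpa using congrFun hc ⟨y, hy⟩
    let w : ι → X → 𝕜 → 𝕜 := update v p fun y => dslope ((∑ j, c j • v j) y) ε₀
    have hw (j) : w j ∈ M := by
      rcases eq_or_ne j p with rfl | hj
      · simpa only [w, update_self] using
          hdiv _ (M.sum_mem fun j _ => M.smul_mem (c j) (hv j)) fun y hy => by
            simpa [Finset.sum_apply] using hzero y hy
      · simpa only [w, update_of_ne hj] using hv j
    have hfactor : (fun ε => (sampleMatrix v x ε).det) =
        (fun ε => (c p)⁻¹ * (ε - ε₀)) * fun ε => (sampleMatrix w x ε).det := by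
      funext ε
      rw [Pi.mul_apply, mul_assoc, ← mul_det_sampleMatrix_eq c p fun i => hzero _ (hx i),
        inv_mul_cancel_left₀ hp]
    have hlin : AnalyticAt 𝕜 (fun ε => (c p)⁻¹ * (ε - ε₀)) ε₀ := by fun_prop
    have hdet : AnalyticAt 𝕜 (fun ε => (sampleMatrix w x ε).det) ε₀ :=
      analyticAt_det_sampleMatrix fun j i => hM _ (hw j) _ (hx i)
    rw [hfactor, analyticOrderAt_mul hlin hdet, Nat.cast_add, Nat.cast_one, add_comm]
    refine add_le_add (Order.one_le_iff_ne_zero.mpr ?_) (ih hw)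
    exact hlin.analyticOrderAt_ne_zero.mpr (by rw [sub_self, mul_zero])

end Dependence

theorem not_linearIndependent_of_dslope_mem {X ι : Type*} [Finite ι]
    {M : Submodule ℂ (X → ℂ → ℂ)} {S : Set X}
    {v : ι → X → ℂ → ℂ} {W : Set ℂ} {ε₀ : ℂ} (hW : IsOpen W)
    (hWc : IsPreconnected W) (hε₀ : ε₀ ∈ W) (hM : ∀ f ∈ M, ∀ y ∈ S, DifferentiableOn ℂ (f y) W)
    (hdiv : ∀ f ∈ M, (∀ y ∈ S, f y ε₀ = 0) → (fun y => dslope (f y) ε₀) ∈ M)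
    (hdep : ∀ v : ι → X → ℂ → ℂ, (∀ j, v j ∈ M) →
      ¬ LinearIndependent ℂ (fun j (y : S) => v j y ε₀))
    (hv : ∀ j, v j ∈ M) {ε : ℂ} (hε : ε ∈ W) :
    ¬ LinearIndependent ℂ (fun j (y : S) => v j y ε) := by
  classical
  have := Fintype.ofFinite ι
  intro hli
  have hMa (f) (hf : f ∈ M) (y) (hy : y ∈ S) : AnalyticOnNhd ℂ (f y) W :=
    (hM f hf y hy).analyticOnNhd hW
  obtain ⟨x, hx⟩ := exists_det_ne_zero_of_linearIndependent hli
  let d : ℂ → ℂ := fun ε => (sampleMatrix v (fun i => (x i : X)) ε).det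
  have hd : AnalyticOnNhd ℂ d W := fun z hz =>
    analyticAt_det_sampleMatrix fun j i => hMa _ (hv j) _ (x i).2 z hz
  have hd₀ : d =ᶠ[𝓝 ε₀] 0 := analyticOrderAt_eq_top.mp <| ENat.eq_top_iff_forall_ge.mpr <|
    le_analyticOrderAt_det_sampleMatrix (fun f hf y hy => hMa f hf y hy ε₀ hε₀) hdiv hdep hv
      fun i => (x i).2
  exact hx <| hd.eqOn_zero_of_preconnected_of_eventuallyEq_zero hWc hε₀ hd₀ hε

theorem tendstoLocallyUniformlyOn_of_continuousOn_uncurry {X Y E : Type*} [TopologicalSpace X]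
    [TopologicalSpace Y] [UniformSpace E] {F : X → Y → E} {S : Set X} {U : Set Y}
    (hF : ContinuousOn (uncurry F) (S ×ˢ U)) {x₀ : X} (hx₀ : x₀ ∈ S) {l : Filter X}
    (hl : l ≤ 𝓝[S] x₀) :
    TendstoLocallyUniformlyOn F (F x₀) l U := by
  rw [tendstoLocallyUniformlyOn_iff_forall_tendsto]
  intro t ht
  have hslice : Tendsto (fun q : X × Y => F x₀ q.2) (𝓝[S] x₀ ×ˢ 𝓝[U] t) (𝓝 (F x₀ t)) :=
    (hF.comp (f := fun t : Y => (x₀, t)) (by fun_prop) (fun t ht => ⟨hx₀, ht⟩) t ht).tendsto.comp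
      tendsto_snd
  have hjoint : Tendsto (uncurry F) (𝓝[S] x₀ ×ˢ 𝓝[U] t) (𝓝 (F x₀ t)) := by
    rw [← nhdsWithin_prod_eq]
    exact hF (x₀, t) ⟨hx₀, ht⟩
  exact ((hslice.prodMk_nhds hjoint).mono_right (nhds_le_uniformity _)).mono_left
    (prod_mono_left _ hl)

section IteratedDeriv

variable {X E : Type*} [TopologicalSpace X] [NormedAddCommGroup E] [NormedSpace ℂ E]
  [CompleteSpace E] {F : X → ℂ → E} {S : Set X} {U : Set ℂ}

theorem tendstoLocallyUniformlyOn_iteratedDeriv {κ : Type*} {l : Filter κ} {F : κ → ℂ → E}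
    {f : ℂ → E} (hU : IsOpen U) (hF : ∀ᶠ n in l, DifferentiableOn ℂ (F n) U)
    (h : TendstoLocallyUniformlyOn F f l U) (m : ℕ) :
    TendstoLocallyUniformlyOn (fun n => iteratedDeriv m (F n)) (iteratedDeriv m f) l U := by
  induction m with
  | zero => simpa only [iteratedDeriv_zero] using h
  | succ m ih =>
    simp only [iteratedDeriv_succ]
    refine ih.deriv (hF.mono fun n hn => ?_) hU
    rw [iteratedDeriv_eq_iterate]
    exact (hn.analyticOnNhd hU).iterated_deriv m |>.differentiableOn

theorem continuousOn_iteratedDeriv_of_continuousOn_uncurry (hU : IsOpen U)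
    (hF : ContinuousOn (uncurry F) (S ×ˢ U)) (hFd : ∀ x ∈ S, DifferentiableOn ℂ (F x) U) (m : ℕ) :
    ContinuousOn (fun q : X × ℂ => iteratedDeriv m (F q.1) q.2) (S ×ˢ U) := by
  rintro ⟨x, t⟩ ⟨hx, ht⟩
  have hlim := tendstoLocallyUniformlyOn_iteratedDeriv hU
    (eventually_mem_nhdsWithin.mono hFd)
    (tendstoLocallyUniformlyOn_of_continuousOn_uncurry hF hx le_rfl) m
  have hslice : ContinuousOn (iteratedDeriv m (F x)) U := by
    rw [iteratedDeriv_eq_iterate]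
    exact ((hFd x hx).analyticOnNhd hU).iterated_deriv m |>.continuousOn
  rw [ContinuousWithinAt, nhdsWithin_prod_eq]
  exact ((hslice t ht).tendsto.comp tendsto_snd).congr_uniformity
    (tendstoLocallyUniformlyOn_iff_forall_tendsto.mp hlim t ht)

end IteratedDeriv

theorem norm_dslope_sub_le {𝕜 E : Type*} [RCLike 𝕜] [NormedAddCommGroup E] [NormedSpace 𝕜 E]
    {f : 𝕜 → E} {s : Set 𝕜} {C : ℝ} {L : E} {a b : 𝕜} (hs : Convex ℝ s)
    (hf : ∀ z ∈ s, DifferentiableAt 𝕜 f z) (hC : ∀ z ∈ s, ‖deriv f z - L‖ ≤ C)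
    (ha : a ∈ s) (hb : b ∈ s) : ‖dslope f a b - L‖ ≤ C := by
  rcases eq_or_ne b a with rfl | hab
  · simpa using hC b hb
  have hmvt : ‖(f b - b • L) - (f a - a • L)‖ ≤ C * ‖b - a‖ :=
    hs.norm_image_sub_le_of_norm_hasDerivWithin_le (f' := fun z => deriv f z - L)
      (fun z hz => by
        simpa using ((hf z hz).hasDerivAt.sub ((hasDerivAt_id z).smul_const L)).hasDerivWithinAt)
      hC ha hb
  have hfactor : (f b - b • L) - (f a - a • L) = (b - a) • (dslope f a b - L) := by
    rw [smul_sub, sub_smul_dslope]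
    module
  rw [hfactor, norm_smul, mul_comm] at hmvt
  exact le_of_mul_le_mul_right hmvt (norm_pos_iff.mpr (sub_ne_zero.mpr hab))

section Dslope

variable {X E : Type*} [TopologicalSpace X] [NormedAddCommGroup E] [NormedSpace ℂ E]
  {F : X → ℂ → E} {S : Set X} {W : Set ℂ} {c : ℂ}

theorem continuousWithinAt_dslope_uncurry_same {x : X} (hW : W ∈ 𝓝 c)
    (hFd : ∀ x ∈ S, DifferentiableOn ℂ (F x) W)
    (hderiv : ContinuousWithinAt (fun q : X × ℂ => deriv (F q.1) q.2) (S ×ˢ W) (x, c)) :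
    ContinuousWithinAt (fun q : X × ℂ => dslope (F q.1) c q.2) (S ×ˢ W) (x, c) := by
  rw [ContinuousWithinAt, nhdsWithin_prod_eq, nhdsWithin_eq_nhds.mpr hW] at hderiv ⊢
  rw [Metric.tendsto_nhds] at hderiv ⊢
  intro η hη
  obtain ⟨T, hT, V, hV, hTV⟩ := mem_prod_iff.mp (hderiv (η / 2) (half_pos hη))
  obtain ⟨r, hr, hball⟩ := Metric.mem_nhds_iff.mp (inter_mem hV (interior_mem_nhds.mpr hW))
  filter_upwards [prod_mem_prod (inter_mem hT self_mem_nhdsWithin) (Metric.ball_mem_nhds c hr)]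
    with ⟨y, z⟩ ⟨⟨hyT, hyS⟩, hz⟩
  refine (dist_eq_norm _ _).trans_lt (lt_of_le_of_lt ?_ (half_lt_self hη))
  rw [dslope_same]
  refine norm_dslope_sub_le (convex_ball c r)
    (fun w hw => (hFd y hyS).differentiableAt (mem_interior_iff_mem_nhds.mp (hball hw).2))
    (fun w hw => ?_) (Metric.mem_ball_self hr) hz
  rw [← dist_eq_norm]
  exact (hTV (mk_mem_prod hyT (hball hw).1) : _ < _).le

theorem continuousWithinAt_dslope_uncurry_of_ne {x : X} {ε : ℂ} (hne : ε ≠ c) (hc : c ∈ W)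
    (hx : x ∈ S) (hε : ε ∈ W) (hF : ContinuousOn (uncurry F) (S ×ˢ W)) :
    ContinuousWithinAt (fun q : X × ℂ => dslope (F q.1) c q.2) (S ×ˢ W) (x, ε) := by
  have hne' : ∀ᶠ q : X × ℂ in 𝓝[S ×ˢ W] (x, ε), q.2 ≠ c :=
    (continuous_snd.continuousAt.eventually_ne hne).filter_mono nhdsWithin_le_nhds
  have hFc : ContinuousOn (fun q : X × ℂ => F q.1 c) (S ×ˢ W) :=
    hF.comp (f := fun q : X × ℂ => (q.1, c)) (by fun_prop) fun q hq => ⟨hq.1, hc⟩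
  have hslope : ContinuousWithinAt (fun q : X × ℂ => slope (F q.1) c q.2) (S ×ˢ W) (x, ε) := by
    simp only [slope, vsub_eq_sub]
    exact ((by fun_prop : ContinuousWithinAt (fun q : X × ℂ => q.2 - c) _ _).inv₀
      (sub_ne_zero.mpr hne)).smul ((hF _ ⟨hx, hε⟩).sub (hFc _ ⟨hx, hε⟩))
  exact hslope.congr_of_eventuallyEq (hne'.mono fun q hq => dslope_of_ne _ hq)
    (dslope_of_ne _ hne)

theorem continuousOn_dslope_uncurry [CompleteSpace E] (hW : IsOpen W) (hc : c ∈ W)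
    (hF : ContinuousOn (uncurry F) (S ×ˢ W)) (hFd : ∀ x ∈ S, DifferentiableOn ℂ (F x) W) :
    ContinuousOn (fun q : X × ℂ => dslope (F q.1) c q.2) (S ×ˢ W) := by
  rintro ⟨x, ε⟩ ⟨hx, hε⟩
  rcases eq_or_ne ε c with rfl | hne
  · refine continuousWithinAt_dslope_uncurry_same (hW.mem_nhds hc) hFd ?_
    simpa only [iteratedDeriv_one] using
      continuousOn_iteratedDeriv_of_continuousOn_uncurry hW hF hFd 1 (x, ε) ⟨hx, hε⟩
  · exact continuousWithinAt_dslope_uncurry_of_ne hne hc hx hε hF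

end Dslope

/-- The family of functions `y · ε` on `U`, with `ε ∈ W`, is holomorphic in both variables. By
Osgood's lemma this is joint holomorphy; it is phrased as joint continuity with separate
holomorphy so that closure under division by `ε` can be checked directly. -/
structure IsHolomorphicFamilyOn (y : ℂ → ℂ → ℂ) (U W : Set ℂ) : Prop where
  continuousOn : ContinuousOn (uncurry y) (U ×ˢ W)
  differentiableOn_left : ∀ ε ∈ W, DifferentiableOn ℂ (fun t => y t ε) U
  differentiableOn_right : ∀ t ∈ U, DifferentiableOn ℂ (y t) W

namespace IsHolomorphicFamilyOn

variable {U W : Set ℂ} {y z : ℂ → ℂ → ℂ}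

theorem of_differentiableOn_uncurry (hy : DifferentiableOn ℂ (uncurry y) (U ×ˢ W)) :
    IsHolomorphicFamilyOn y U W where
  continuousOn := hy.continuousOn
  differentiableOn_left ε hε :=
    hy.comp (f := fun t : ℂ => (t, ε)) (by fun_prop) fun _ ht => ⟨ht, hε⟩
  differentiableOn_right t ht :=
    hy.comp (f := fun ε : ℂ => (t, ε)) (by fun_prop) fun _ hε => ⟨ht, hε⟩

theorem zero : IsHolomorphicFamilyOn 0 U W :=
  .of_differentiableOn_uncurry (differentiableOn_const 0)

theorem add (hy : IsHolomorphicFamilyOn y U W) (hz : IsHolomorphicFamilyOn z U W) :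
    IsHolomorphicFamilyOn (y + z) U W where
  continuousOn := hy.continuousOn.add hz.continuousOn
  differentiableOn_left ε hε := (hy.differentiableOn_left ε hε).add (hz.differentiableOn_left ε hε)
  differentiableOn_right t ht :=
    (hy.differentiableOn_right t ht).add (hz.differentiableOn_right t ht)

theorem const_smul (c : ℂ) (hy : IsHolomorphicFamilyOn y U W) :
    IsHolomorphicFamilyOn (c • y) U W where
  continuousOn := hy.continuousOn.const_smul c
  differentiableOn_left ε hε := (hy.differentiableOn_left ε hε).const_smul c
  differentiableOn_right t ht := (hy.differentiableOn_right t ht).const_smul c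

theorem continuousOn_uncurry_swap (hy : IsHolomorphicFamilyOn y U W) :
    ContinuousOn (uncurry fun ε t => y t ε) (W ×ˢ U) :=
  hy.continuousOn.comp continuous_swap.continuousOn fun _ hq => ⟨hq.2, hq.1⟩

theorem continuousOn_iteratedDeriv (hU : IsOpen U) (hy : IsHolomorphicFamilyOn y U W)
    {t : ℂ} (ht : t ∈ U) (m : ℕ) :
    ContinuousOn (fun ε => iteratedDeriv m (fun τ => y τ ε) t) W :=
  (continuousOn_iteratedDeriv_of_continuousOn_uncurry hU hy.continuousOn_uncurry_swap
    hy.differentiableOn_left m).comp (f := fun ε : ℂ => (ε, t)) (by fun_prop)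
    fun _ hε => ⟨hε, ht⟩

protected theorem dslope (hU : IsOpen U) (hW : IsOpen W) {c : ℂ} (hc : c ∈ W)
    (hy : IsHolomorphicFamilyOn y U W) :
    IsHolomorphicFamilyOn (fun t => dslope (y t) c) U W := by
  have hcont : ContinuousOn (uncurry fun t => dslope (y t) c) (U ×ˢ W) :=
    continuousOn_dslope_uncurry hW hc hy.continuousOn hy.differentiableOn_right
  have hne (ε) (hε : ε ∈ W) (hεc : ε ≠ c) :
      DifferentiableOn ℂ (fun t => dslope (y t) c ε) U := by
    simp only [dslope_of_ne _ hεc, slope, vsub_eq_sub]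
    exact ((hy.differentiableOn_left ε hε).sub (hy.differentiableOn_left c hc)).const_smul
      (ε - c)⁻¹
  have hsame : DifferentiableOn ℂ (fun t => dslope (y t) c c) U := by
    have hl : 𝓝[≠] c ≤ 𝓝[W] c :=
      nhdsWithin_le_nhds.trans (hW.nhdsWithin_eq hc).ge
    refine (tendstoLocallyUniformlyOn_of_continuousOn_uncurry
      (F := fun ε t => dslope (y t) c ε) ?_ hc hl).differentiableOn ?_ hU
    · exact hcont.comp continuous_swap.continuousOn fun _ hq => ⟨hq.2, hq.1⟩
    · filter_upwards [self_mem_nhdsWithin, nhdsWithin_le_nhds (hW.mem_nhds hc)] with ε hεc hε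
      exact hne ε hε hεc
  refine ⟨hcont, fun ε hε => ?_, fun t ht =>
    (Complex.differentiableOn_dslope (hW.mem_nhds hc)).mpr (hy.differentiableOn_right t ht)⟩
  rcases eq_or_ne ε c with rfl | hεc
  exacts [hsame, hne ε hε hεc]

end IsHolomorphicFamilyOn

section Uniqueness

variable {𝕜 : Type*} [NontriviallyNormedField 𝕜] [CharZero 𝕜] {z₀ : 𝕜}

theorem exists_iteratedDeriv_eventuallyEq_pow_smul {E : Type*} [NormedAddCommGroup E]
    [NormedSpace 𝕜 E] [CompleteSpace E] {f : 𝕜 → E} (hf : AnalyticAt 𝕜 f z₀) {m i : ℕ}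
    (hm : analyticOrderAt f z₀ = m) (hi : i ≤ m) :
    ∃ g : 𝕜 → E, AnalyticAt 𝕜 g z₀ ∧ g z₀ ≠ 0 ∧
      iteratedDeriv i f =ᶠ[𝓝 z₀] fun z => (z - z₀) ^ (m - i) • g z := by
  rw [iteratedDeriv_eq_iterate]
  refine (hf.iterated_deriv i).analyticOrderAt_eq_natCast.mp ?_
  rcases eq_or_ne m 0 with rfl | hm0
  · simpa [Nat.le_zero.mp hi] using hm
  · exact analyticOrderAt_iterated_deriv hf hm.symm hm0 hi

theorem eventuallyEq_zero_of_linear_ode [CompleteSpace 𝕜] {f : 𝕜 → 𝕜} {a : ℕ → 𝕜 → 𝕜} {K : ℕ}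
    (ha : ∀ i ≤ K, ContinuousAt (a i) z₀) (haK : a K z₀ ≠ 0) (hf : AnalyticAt 𝕜 f z₀)
    (hode : ∀ᶠ z in 𝓝 z₀, ∑ i ∈ Finset.range (K + 1), a i z * iteratedDeriv i f z = 0)
    (hjet : ∀ i < K, iteratedDeriv i f z₀ = 0) : f =ᶠ[𝓝 z₀] 0 := by
  rw [EventuallyEq, Pi.zero_def, ← analyticOrderAt_eq_top]
  by_contra htop
  obtain ⟨m, hm⟩ := ENat.ne_top_iff_exists.mp htop
  have hKm : K ≤ m := by
    rw [← Nat.cast_le (α := ℕ∞), hm]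
    exact (natCast_le_analyticOrderAt_iff_iteratedDeriv_eq_zero hf).mpr hjet
  choose! g hg hg0 hfg using fun i (hi : i ≤ K) =>
    exists_iteratedDeriv_eventuallyEq_pow_smul hf hm.symm (hi.trans hKm)
  -- Divided by `(z - z₀) ^ (m - K)`, the equation retains only its top term at `z₀`.
  let R : 𝕜 → 𝕜 := fun z => ∑ i ∈ Finset.range (K + 1), a i z * ((z - z₀) ^ (K - i) * g i z)
  have hle {i : ℕ} (hi : i ∈ Finset.range (K + 1)) : i ≤ K := Finset.mem_range_succ_iff.mp hi
  have hR : ContinuousAt R z₀ := by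
    refine tendsto_finsetSum _ fun i hi => ?_
    exact (ha i (hle hi)).mul (ContinuousAt.mul (by fun_prop) (hg i (hle hi)).continuousAt)
  have hRz : R =ᶠ[𝓝[≠] z₀] 0 := by
    filter_upwards [self_mem_nhdsWithin, hode.filter_mono nhdsWithin_le_nhds,
      ((Finset.range (K + 1)).eventually_all.mpr fun i hi => hfg i (hle hi)).filter_mono
        nhdsWithin_le_nhds] with z hz hzode hzfg
    have hfactor : (z - z₀) ^ (m - K) * R z = 0 := by
      rw [← hzode, Finset.mul_sum]
      refine Finset.sum_congr rfl fun i hi => ?_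
      rw [hzfg i hi, smul_eq_mul, show m - i = (m - K) + (K - i) by have := hle hi; omega, pow_add]
      ring
    exact (mul_eq_zero.mp hfactor).resolve_left (pow_ne_zero _ (sub_ne_zero.mpr hz))
  have hR0 : R z₀ = a K z₀ * g K z₀ := by
    refine (Finset.sum_eq_single_of_mem K (Finset.self_mem_range_succ K) fun i hi hiK => ?_).trans
      (by simp)
    simp [Nat.sub_ne_zero_of_lt (lt_of_le_of_ne (hle hi) hiK)]
  have hRz₀ : R z₀ = 0 :=
    ((hR.eventuallyEq_nhds_iff_eventuallyEq_nhdsNE continuousAt_const).mp hRz).eq_of_nhds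
  exact mul_ne_zero haK (hg0 K le_rfl) (hR0.symm.trans hRz₀)

end Uniqueness

section Dimension

variable {ι : Type*} [Fintype ι] {U : Set ℂ} {a : ℕ → ℂ → ℂ} {Y : ι → ℂ → ℂ}

theorem not_linearIndependent_of_linear_ode_of_ne_zero (hU : IsOpen U) (hUc : IsPreconnected U)
    {K : ℕ} (hK : K < Fintype.card ι) (ha : ∀ i ≤ K, ContinuousOn (a i) U)
    {t₀ : ℂ} (ht₀ : t₀ ∈ U) (haK : a K t₀ ≠ 0) (hY : ∀ j, DifferentiableOn ℂ (Y j) U)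
    (hode : ∀ j, ∀ t ∈ U, ∑ i ∈ Finset.range (K + 1), a i t * iteratedDeriv i (Y j) t = 0) :
    ¬ LinearIndependent ℂ (fun j (t : U) => Y j t) := by
  have hYa (j) : AnalyticOnNhd ℂ (Y j) U := (hY j).analyticOnNhd hU
  have hjets : ¬ LinearIndependent ℂ (fun j (i : Fin K) => iteratedDeriv i (Y j) t₀) := fun h =>
    hK.not_ge (by simpa using h.fintype_card_le_finrank)
  obtain ⟨c, hc, p, hp⟩ := Fintype.not_linearIndependent_iff.mp hjets
  let f : ℂ → ℂ := fun t => ∑ j, c j * Y j t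
  have hf : AnalyticOnNhd ℂ f U := fun t ht =>
    Finset.analyticAt_fun_sum _ fun j _ => analyticAt_const.mul (hYa j t ht)
  have hfd (i : ℕ) {t} (ht : t ∈ U) :
      iteratedDeriv i f t = ∑ j, c j * iteratedDeriv i (Y j) t :=
    (iteratedDeriv_fun_sum fun j _ =>
      (analyticAt_const.mul (hYa j t ht)).contDiffAt).trans
      (Finset.sum_congr rfl fun j _ => iteratedDeriv_const_mul_field (c j) (Y j))
  have hfode {t} (ht : t ∈ U) :
      ∑ i ∈ Finset.range (K + 1), a i t * iteratedDeriv i f t = 0 := by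
    simp only [hfd _ ht, Finset.mul_sum]
    rw [Finset.sum_comm]
    refine Finset.sum_eq_zero fun j _ => ?_
    simp only [mul_left_comm (a _ t), ← Finset.mul_sum, hode j t ht, mul_zero]
  have hjet (i) (hi : i < K) : iteratedDeriv i f t₀ = 0 := by
    simpa [hfd i ht₀] using congrFun hc ⟨i, hi⟩
  have hf0 : f =ᶠ[𝓝 t₀] 0 := eventuallyEq_zero_of_linear_ode
    (fun i hi => (ha i hi).continuousAt (hU.mem_nhds ht₀)) haK (hf t₀ ht₀)
    (eventually_of_mem (hU.mem_nhds ht₀) fun t ht => hfode ht) hjet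
  refine Fintype.not_linearIndependent_iff.mpr ⟨c, ?_, p, hp⟩
  ext t
  rw [Finset.sum_apply]
  exact hf.eqOn_zero_of_preconnected_of_eventuallyEq_zero hUc ht₀ hf0 t.2

theorem not_linearIndependent_of_linear_ode (hU : IsOpen U) (hUc : IsPreconnected U) {m : ℕ}
    (hm : m ≤ Fintype.card ι) (ha : ∀ i < m, ContinuousOn (a i) U)
    (hne : ∃ k < m, ∃ t ∈ U, a k t ≠ 0) (hY : ∀ j, DifferentiableOn ℂ (Y j) U)
    (hode : ∀ j, ∀ t ∈ U, ∑ i ∈ Finset.range m, a i t * iteratedDeriv i (Y j) t = 0) :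
    ¬ LinearIndependent ℂ (fun j (t : U) => Y j t) := by
  induction m with
  | zero => simp at hne
  | succ m ih =>
    by_cases htop : ∃ t ∈ U, a m t ≠ 0
    · obtain ⟨t₀, ht₀, ham⟩ := htop
      exact not_linearIndependent_of_linear_ode_of_ne_zero hU hUc hm
        (fun i hi => ha i (Nat.lt_succ_of_le hi)) ht₀ ham hY hode
    · push Not at htop
      obtain ⟨k, hk, t, ht, hakt⟩ := hne
      refine ih (Nat.le_of_succ_le hm) (fun i hi => ha i (hi.trans m.lt_succ_self))
        ⟨k, (Nat.lt_succ_iff_lt_or_eq.mp hk).resolve_right ?_, t, ht, hakt⟩ fun j t ht => ?_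
      · rintro rfl
        exact hakt (htop t ht)
      · simpa [Finset.sum_range_succ, htop t ht] using hode j t ht

end Dimension

section ParamEquation

variable {n : ℕ} {e : ℂ → ℂ → ℂ} {a : ℕ → ℂ → ℂ → ℂ} {U W : Set ℂ} {y z : ℂ → ℂ → ℂ} {t ε ε₀ : ℂ}

/-- The left-hand side `e y⁽ⁿ⁾ + a_{n-1} y⁽ⁿ⁻¹⁾ + ⋯ + a_0 y` of the parameter-dependent equation,
derivatives being taken in `t`. The leading coefficient `e` is kept apart from the others because
it degenerates at the base parameter. -/
noncomputable def paramDiffOp (n : ℕ) (e : ℂ → ℂ → ℂ) (a : ℕ → ℂ → ℂ → ℂ) (y : ℂ → ℂ → ℂ)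
    (t ε : ℂ) : ℂ :=
  e t ε * iteratedDeriv n (fun τ => y τ ε) t +
    ∑ i ∈ Finset.range n, a i t ε * iteratedDeriv i (fun τ => y τ ε) t

theorem paramDiffOp_zero : paramDiffOp n e a 0 t ε = 0 := by
  simp [paramDiffOp]

theorem paramDiffOp_add (hy : AnalyticAt ℂ (fun τ => y τ ε) t)
    (hz : AnalyticAt ℂ (fun τ => z τ ε) t) :
    paramDiffOp n e a (y + z) t ε = paramDiffOp n e a y t ε + paramDiffOp n e a z t ε := by
  simp only [paramDiffOp, Pi.add_apply, iteratedDeriv_fun_add hy.contDiffAt hz.contDiffAt,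
    mul_add, Finset.sum_add_distrib]
  ring

theorem paramDiffOp_of_eventuallyEq_const_mul {c : ℂ} (h : ∀ᶠ τ in 𝓝 t, z τ ε = c * y τ ε) :
    paramDiffOp n e a z t ε = c * paramDiffOp n e a y t ε := by
  have hderiv (i : ℕ) :
      iteratedDeriv i (fun τ => z τ ε) t = c * iteratedDeriv i (fun τ => y τ ε) t :=
    (EventuallyEq.iteratedDeriv_eq i h).trans (iteratedDeriv_const_mul_field _ _)
  simp only [paramDiffOp, hderiv, mul_left_comm _ c, mul_add, Finset.mul_sum]

theorem IsHolomorphicFamilyOn.continuousOn_paramDiffOp (hU : IsOpen U)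
    (hy : IsHolomorphicFamilyOn y U W) (ht : t ∈ U) (he : ContinuousOn (e t) W)
    (ha : ∀ i < n, ContinuousOn (a i t) W) : ContinuousOn (paramDiffOp n e a y t) W :=
  (he.mul (hy.continuousOn_iteratedDeriv hU ht n)).add <| continuousOn_finsetSum _ fun i hi =>
    (ha i (Finset.mem_range.mp hi)).mul (hy.continuousOn_iteratedDeriv hU ht i)

/-- The space of parameter-dependent solutions on `U × W`: families holomorphic on `U × W` that
solve the equation on `U` for every parameter in `W`. -/
def solutionFamilies (hU : IsOpen U) (W : Set ℂ) (n : ℕ) (e : ℂ → ℂ → ℂ) (a : ℕ → ℂ → ℂ → ℂ) :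
    Submodule ℂ (ℂ → ℂ → ℂ) where
  carrier := {y | IsHolomorphicFamilyOn y U W ∧ ∀ ε ∈ W, ∀ t ∈ U, paramDiffOp n e a y t ε = 0}
  zero_mem' := ⟨.zero, fun _ _ _ _ => paramDiffOp_zero⟩
  add_mem' {y z} hy hz := by
    refine ⟨hy.1.add hz.1, fun ε hε t ht => ?_⟩
    rw [paramDiffOp_add ((hy.1.differentiableOn_left ε hε).analyticAt (hU.mem_nhds ht))
      ((hz.1.differentiableOn_left ε hε).analyticAt (hU.mem_nhds ht)),
      hy.2 ε hε t ht, hz.2 ε hε t ht, add_zero]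
  smul_mem' c y hy := by
    refine ⟨hy.1.const_smul c, fun ε hε t ht => ?_⟩
    rw [paramDiffOp_of_eventuallyEq_const_mul (y := y) (.of_forall fun _ => rfl), hy.2 ε hε t ht,
      mul_zero]

theorem dslope_mem_solutionFamilies (hU : IsOpen U) (hW : IsOpen W) (hε₀ : ε₀ ∈ W)
    (he : ∀ t ∈ U, ContinuousOn (e t) W) (ha : ∀ i < n, ∀ t ∈ U, ContinuousOn (a i t) W)
    (hy : y ∈ solutionFamilies hU W n e a) (hy₀ : ∀ t ∈ U, y t ε₀ = 0) :
    (fun t => dslope (y t) ε₀) ∈ solutionFamilies hU W n e a := by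
  have hz : IsHolomorphicFamilyOn (fun t => dslope (y t) ε₀) U W := hy.1.dslope hU hW hε₀
  refine ⟨hz, fun ε hε t ht => ?_⟩
  have hne {ε : ℂ} (hε : ε ∈ W) (hεε₀ : ε ≠ ε₀) :
      paramDiffOp n e a (fun t => dslope (y t) ε₀) t ε = 0 := by
    rw [paramDiffOp_of_eventuallyEq_const_mul (y := y) (c := (ε - ε₀)⁻¹), hy.2 ε hε t ht, mul_zero]
    filter_upwards [hU.mem_nhds ht] with τ hτ
    rw [dslope_of_ne _ hεε₀, slope_def_field, hy₀ τ hτ, sub_zero, div_eq_inv_mul]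
  rcases eq_or_ne ε ε₀ with rfl | hεε₀
  · have hcont : ContinuousAt (paramDiffOp n e a (fun t => dslope (y t) ε) t) ε :=
      (hz.continuousOn_paramDiffOp hU ht (he t ht) fun i hi => ha i hi t ht).continuousAt
        (hW.mem_nhds hε)
    refine EventuallyEq.eq_of_nhds <|
      (hcont.eventuallyEq_nhds_iff_eventuallyEq_nhdsNE (g := fun _ => 0) continuousAt_const).mp ?_
    filter_upwards [self_mem_nhdsWithin, nhdsWithin_le_nhds (hW.mem_nhds hε)] with η hη hηW
    exact hne hηW hη
  · exact hne hε hεε₀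

end ParamEquation

theorem stmt14_general (n k : ℕ) (hkn : k < n)
    (U W : Set ℂ) (hU : IsOpen U) (hUc : IsPreconnected U)
    (hW : IsOpen W) (hWc : IsPreconnected W) (h0W : (0 : ℂ) ∈ W)
    (e : ℂ → ℂ → ℂ) (he : ∀ t ∈ U, ContinuousOn (e t) W) (he0 : ∀ t ∈ U, e t 0 = 0)
    (a : ℕ → ℂ → ℂ → ℂ)
    (ha : ∀ i < n, ContinuousOn (fun q : ℂ × ℂ => a i q.1 q.2) (U ×ˢ W))
    (hak : ∃ t ∈ U, a k t 0 ≠ 0) :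
    ¬ ∃ y : Fin n → ℂ → ℂ → ℂ,
      (∀ j, DifferentiableOn ℂ (fun q : ℂ × ℂ => y j q.1 q.2) (U ×ˢ W)) ∧
      (∀ j, ∀ ε ∈ W, ∀ t ∈ U,
        e t ε * iteratedDeriv n (fun τ => y j τ ε) t +
          ∑ i ∈ Finset.range n, a i t ε * iteratedDeriv i (fun τ => y j τ ε) t = 0) ∧
      (∃ ε ∈ W, LinearIndependent ℂ (fun j : Fin n => fun t : U => y j (t : ℂ) ε)) := by
  rintro ⟨y, hy, hode, ε, hε, hli⟩
  have ha_right (i) (hi : i < n) (t) (ht : t ∈ U) : ContinuousOn (a i t) W :=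
    (ha i hi).comp (f := fun ε : ℂ => (t, ε)) (by fun_prop) fun _ hε => ⟨ht, hε⟩
  have ha_left (i) (hi : i < n) : ContinuousOn (fun t => a i t 0) U :=
    (ha i hi).comp (f := fun t : ℂ => (t, 0)) (by fun_prop) fun _ ht => ⟨ht, h0W⟩
  have hdep (v : Fin n → ℂ → ℂ → ℂ) (hv : ∀ j, v j ∈ solutionFamilies hU W n e a) :
      ¬ LinearIndependent ℂ (fun j (t : U) => v j t 0) := by
    refine not_linearIndependent_of_linear_ode (Y := fun j t => v j t 0) hU hUc
      (Fintype.card_fin n).ge ha_left ⟨k, hkn, hak⟩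
      (fun j => (hv j).1.differentiableOn_left 0 h0W) fun j t ht => ?_
    simpa [paramDiffOp, he0 t ht] using (hv j).2 0 h0W t ht
  exact not_linearIndependent_of_dslope_mem (M := solutionFamilies hU W n e a) hW hWc h0W
    (fun f hf t ht => hf.1.differentiableOn_right t ht)
    (fun f hf hf₀ => dslope_mem_solutionFamilies hU hW h0W he ha_right hf hf₀) hdep
    (fun j => ⟨.of_differentiableOn_uncurry (hy j), hode j⟩) hε hli

/-- For a singularly perturbed linear ODE
`ε^s y^{(n)} + a_{n−1}(t,ε)y^{(n−1)} + … + a_0(t,ε)y = 0` with `s ≥ 1` and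
`a_k(·,0) ≢ 0` for some `1 ≤ k ≤ n−1`, there cannot exist `n`
parameter-dependent solutions holomorphic on the full polydisc `U × W` that
are linearly independent over `ℂ` for at least one value of `ε ∈ W`. -/
theorem stmt14 (n s k : ℕ) (hs : 1 ≤ s) (hk1 : 1 ≤ k) (hkn : k ≤ n - 1)
    (U W : Set ℂ) (hU : IsOpen U) (hUc : IsPreconnected U)
    (hW : IsOpen W) (hWc : IsPreconnected W) (h0W : (0 : ℂ) ∈ W)
    (a : ℕ → ℂ → ℂ → ℂ)
    (ha : ∀ i < n, DifferentiableOn ℂ (fun q : ℂ × ℂ => a i q.1 q.2) (U ×ˢ W))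
    (hak : ∃ t ∈ U, a k t 0 ≠ 0) :
    ¬ ∃ y : Fin n → ℂ → ℂ → ℂ,
      (∀ j, DifferentiableOn ℂ (fun q : ℂ × ℂ => y j q.1 q.2) (U ×ˢ W)) ∧
      (∀ j, ∀ ε ∈ W, ∀ t ∈ U,
        ε ^ s * iteratedDeriv n (fun τ => y j τ ε) t +
          ∑ i ∈ Finset.range n, a i t ε * iteratedDeriv i (fun τ => y j τ ε) t = 0) ∧
      (∃ ε ∈ W, LinearIndependent ℂ (fun j : Fin n => fun t : U => y j (t : ℂ) ε)) :=
  stmt14_general n k (by omega) U W hU hUc hW hWc h0W (fun _ ε => ε ^ s)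
    (fun _ _ => by fun_prop) (fun _ _ => zero_pow (by omega)) a
    (fun i hi => (ha i hi).continuousOn) hak
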